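/- Let π be any permutation of {1,…,m}. For every vector y ∈ Range(Aᵀ) with y ≠ 0, one has the strict inequality ‖T_π y‖₂ < ‖y‖₂. -/

import Mathlib

/-!
Each projection `P_a x = x - (⟪a, x⟫ / ‖a‖²) • a` satisfies `‖P_a x‖² = ‖x‖² - ⟪a, x⟫² / ‖a‖²`, so it
strictly shrinks `x` unless `⟪a, x⟫ = 0`, in which case it fixes `x`. By induction along the list of
rows, a product of such projections either strictly shrinks `x`, or `x` is orthogonal to every row
(`norm_prod_lt_or_forall_inner_eq_zero`). A vector of the row space orthogonal to every row is
orthogonal to itself, hence zero, so only the first alternative is possible when `y ≠ 0`.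
-/

open scoped RealInnerProductSpace

noncomputable section

/-- The orthogonal projection onto the hyperplane orthogonal to `a`,
i.e. the map `x ↦ x - (⟪a, x⟫ / ‖a‖²) • a` (the matrix `I - a aᵀ / ‖a‖²`). -/
def hypProj {n : ℕ} (a : EuclideanSpace ℝ (Fin n)) :
    EuclideanSpace ℝ (Fin n) →L[ℝ] EuclideanSpace ℝ (Fin n) :=
  ContinuousLinearMap.id ℝ _ - (innerSL ℝ a).smulRight ((‖a‖ ^ 2)⁻¹ • a)

/-- The iteration matrix `T_π = (I - a_{π(m)}a_{π(m)}ᵀ/‖a_{π(m)}‖²) ⋯ (I - a_{π(1)}a_{π(1)}ᵀ/‖a_{π(1)}‖²)`. -/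
def iterMat {m n : ℕ} (a : Fin m → EuclideanSpace ℝ (Fin n)) (π : Equiv.Perm (Fin m)) :
    EuclideanSpace ℝ (Fin n) →L[ℝ] EuclideanSpace ℝ (Fin n) :=
  (List.ofFn fun i => hypProj (a (π i))).reverse.prod

theorem hypProj_apply {n : ℕ} (a x : EuclideanSpace ℝ (Fin n)) :
    hypProj a x = x - (⟪a, x⟫ * (‖a‖ ^ 2)⁻¹) • a := by
  simp [hypProj, smul_smul]

theorem norm_hypProj_sq {n : ℕ} (a x : EuclideanSpace ℝ (Fin n)) :
    ‖hypProj a x‖ ^ 2 = ‖x‖ ^ 2 - ⟪a, x⟫ ^ 2 * (‖a‖ ^ 2)⁻¹ := by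
  rcases eq_or_ne a 0 with rfl | h
  · simp [hypProj_apply]
  · have h' : ‖a‖ ≠ 0 := norm_ne_zero_iff.mpr h
    rw [hypProj_apply, norm_sub_sq_real, inner_smul_right, norm_smul, mul_pow, Real.norm_eq_abs,
      sq_abs, real_inner_comm]
    field_simp
    ring

/-- The norm drops strictly off the hyperplane `aᗮ`. For `a = 0` the first alternative holds. -/
theorem inner_eq_zero_or_norm_hypProj_lt {n : ℕ} (a x : EuclideanSpace ℝ (Fin n)) :
    ⟪a, x⟫ = 0 ∨ ‖hypProj a x‖ < ‖x‖ := by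
  refine or_iff_not_imp_left.mpr fun h => ?_
  have ha : a ≠ 0 := by
    rintro rfl
    simp at h
  have hpos : 0 < ⟪a, x⟫ ^ 2 * (‖a‖ ^ 2)⁻¹ := by positivity
  refine lt_of_pow_lt_pow_left₀ 2 (norm_nonneg x) ?_
  rw [norm_hypProj_sq]
  linarith

theorem norm_prod_lt_or_forall_inner_eq_zero {n : ℕ} (l : List (EuclideanSpace ℝ (Fin n)))
    (x : EuclideanSpace ℝ (Fin n)) :
    ‖(l.map hypProj).reverse.prod x‖ < ‖x‖ ∨
      ((∀ a ∈ l, ⟪a, x⟫ = 0) ∧ (l.map hypProj).reverse.prod x = x) := by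
  induction l generalizing x with
  | nil => simp
  | cons a l ih =>
    have hprod : ((a :: l).map hypProj).reverse.prod x
        = (l.map hypProj).reverse.prod (hypProj a x) := by
      simp
    rw [hprod]
    rcases inner_eq_zero_or_norm_hypProj_lt a x with h | h
    · have hx : hypProj a x = x := by simp [hypProj_apply, h]
      rw [hx]
      exact (ih x).imp_right fun ⟨h1, h2⟩ => ⟨List.forall_mem_cons.mpr ⟨h, h1⟩, h2⟩
    · left
      rcases ih (hypProj a x) with h1 | ⟨-, h1⟩
      · exact h1.trans h
      · rwa [h1]

/-- for any permutation `π` and any nonzero `y` in the row space `Range(Aᵀ)`,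
`‖T_π y‖₂ < ‖y‖₂`. -/
theorem norm_iterMat_apply_lt {m n : ℕ}
    (a : Fin m → EuclideanSpace ℝ (Fin n)) (ha : ∀ i, a i ≠ 0)
    (π : Equiv.Perm (Fin m)) (y : EuclideanSpace ℝ (Fin n))
    (hy : y ∈ Submodule.span ℝ (Set.range a)) (hy0 : y ≠ 0) :
    ‖iterMat a π y‖ < ‖y‖ := by
  have hit : iterMat a π = ((List.ofFn fun i => a (π i)).map hypProj).reverse.prod := by
    rw [List.map_ofFn]
    rfl
  rw [hit]
  refine (norm_prod_lt_or_forall_inner_eq_zero _ y).resolve_right ?_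
  rintro ⟨h, -⟩
  have hrow : ∀ i, ⟪a i, y⟫ = 0 := fun i =>
    h (a i) ((List.mem_ofFn' _ _).mpr ⟨π.symm i, by simp⟩)
  have hspan : ∀ z ∈ Submodule.span ℝ (Set.range a), ⟪z, y⟫ = 0 := by
    intro z hz
    induction hz using Submodule.span_induction with
    | mem z hz =>
      obtain ⟨i, rfl⟩ := hz
      exact hrow i
    | zero => exact inner_zero_left _
    | add u v _ _ hu hv => rw [inner_add_left, hu, hv, add_zero]
    | smul c u _ hu => rw [real_inner_smul_left, hu, mul_zero]
  exact hy0 (inner_self_eq_zero.mp (hspan y hy))
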